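/- Caccioppoli-type inequality (inequality (3.3) of Lemma 3.1, smooth interior form): let D ⊆ D* be open, let δ > 0, and suppose there is a continuously differentiable η : ℝ^d → ℝ with support a compact subset of D*, 0 ≤ η ≤ 1 everywhere, η ≡ 1 on D, and |∇η(x)| ≤ δ⁻¹ for all x. Then every u that is B-harmonic on D* satisfies ‖u‖_{a,D} ≤ √(2 a_max + 1) · δ⁻¹ · ‖u‖_{L²(D* \ D)} + √( 2‖div b‖_∞ + ‖b‖_∞² (1 + a_min⁻¹) ) · ‖u‖_{L²(D*)}. -/

import Mathlib

open MeasureTheory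

/-- Partial derivative in direction `i`. -/
noncomputable def pd (d : ℕ) (i : Fin d) (f : (Fin d → ℝ) → ℝ) (x : Fin d → ℝ) : ℝ :=
  fderiv ℝ f x (Pi.single i 1)

/-- The integrand `A ∇f · ∇g` at a point. -/
noncomputable def aForm (d : ℕ) (A : (Fin d → ℝ) → Matrix (Fin d) (Fin d) ℝ)
    (f g : (Fin d → ℝ) → ℝ) (x : Fin d → ℝ) : ℝ :=
  ∑ i, ∑ j, A x i j * pd d j f x * pd d i g x

/-- Divergence of a vector field. -/
noncomputable def divg (d : ℕ) (b : (Fin d → ℝ) → Fin d → ℝ) (x : Fin d → ℝ) : ℝ :=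
  ∑ i, fderiv ℝ (fun y => b y i) x (Pi.single i 1)

/-- `u` is B-harmonic on `Dstar`: it is `C¹` and
`∫_{D*} (A ∇u)·∇v − u b·∇v dx = 0` for all `C¹` functions `v` with compact support in `Dstar`. -/
def BHarmonic (d : ℕ) (Dstar : Set (Fin d → ℝ))
    (A : (Fin d → ℝ) → Matrix (Fin d) (Fin d) ℝ)
    (b : (Fin d → ℝ) → Fin d → ℝ) (u : (Fin d → ℝ) → ℝ) : Prop :=
  ContDiff ℝ 1 u ∧
  ∀ v : (Fin d → ℝ) → ℝ, ContDiff ℝ 1 v → HasCompactSupport v → tsupport v ⊆ Dstar →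
    ∫ x in Dstar, (aForm d A u v x - u x * ∑ i, b x i * pd d i v x) = 0

/-!
Test the equation with `η² u`. Since `A` is symmetric, completing the square moves both copies of
the cutoff inside, and half of the divergence theorem for `(η u)² b` removes the derivatives of `u`
from the drift term. What remains is the localization identity
`∫ A∇(ηu)·∇(ηu) = ∫ (A∇η·∇η + η b·∇η - ½ η² div b) u²`.
On `D` the cutoff is maximal, so `∇η = 0` there and the terms carrying `∇η` only see `D* \ D`.
-/

section Pointwise

variable {d : ℕ} {A : (Fin d → ℝ) → Matrix (Fin d) (Fin d) ℝ} {b : (Fin d → ℝ) → Fin d → ℝ}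
  {f g h η u : (Fin d → ℝ) → ℝ} {x : Fin d → ℝ}

/-- The derivative `b · ∇f` of `f` along the vector field `b`. -/
noncomputable def advect (d : ℕ) (b : (Fin d → ℝ) → Fin d → ℝ) (f : (Fin d → ℝ) → ℝ)
    (x : Fin d → ℝ) : ℝ :=
  ∑ i, b x i * pd d i f x

/-- The potential `A∇η·∇η + η b·∇η - ½ η² div b` produced by cutting off with `η`: if `u` is
B-harmonic, the energy of `η u` is the integral of this potential against `u²`. -/
noncomputable def cutoffPotential (d : ℕ) (A : (Fin d → ℝ) → Matrix (Fin d) (Fin d) ℝ)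
    (b : (Fin d → ℝ) → Fin d → ℝ) (η : (Fin d → ℝ) → ℝ) (x : Fin d → ℝ) : ℝ :=
  aForm d A η η x + η x * advect d b η x - η x ^ 2 / 2 * divg d b x

lemma pd_mul (i : Fin d) (hf : DifferentiableAt ℝ f x) (hg : DifferentiableAt ℝ g x) :
    pd d i (f * g) x = f x * pd d i g x + g x * pd d i f x := by
  simp [pd, fderiv_mul hf hg]

lemma pd_eq_zero_of_notMem_tsupport (i : Fin d) (hx : x ∉ tsupport f) : pd d i f x = 0 := by
  simp [pd, fderiv_of_notMem_tsupport ℝ hx]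

lemma pd_eq_zero_of_isLocalMax (i : Fin d) (hx : IsLocalMax f x) : pd d i f x = 0 := by
  simp [pd, hx.fderiv_eq_zero]

lemma advect_mul (hf : DifferentiableAt ℝ f x) (hg : DifferentiableAt ℝ g x) :
    advect d b (f * g) x = f x * advect d b g x + g x * advect d b f x := by
  simp only [advect, pd_mul _ hf hg, Finset.mul_sum, ← Finset.sum_add_distrib]
  exact Finset.sum_congr rfl fun i _ => by ring

lemma aForm_comm (hA : (A x).IsSymm) : aForm d A f g x = aForm d A g f x := by
  unfold aForm
  rw [Finset.sum_comm]
  refine Finset.sum_congr rfl fun i _ => Finset.sum_congr rfl fun j _ => ?_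
  rw [hA.apply]
  ring

lemma aForm_mul_right (hg : DifferentiableAt ℝ g x) (hh : DifferentiableAt ℝ h x) :
    aForm d A f (g * h) x = g x * aForm d A f h x + h x * aForm d A f g x := by
  simp only [aForm, pd_mul _ hg hh, Finset.mul_sum, ← Finset.sum_add_distrib]
  exact Finset.sum_congr rfl fun i _ => Finset.sum_congr rfl fun j _ => by ring

lemma aForm_mul_mul_self (hA : (A x).IsSymm) (hη : DifferentiableAt ℝ η x)
    (hu : DifferentiableAt ℝ u x) :
    aForm d A (η * u) (η * u) x
      = aForm d A u (η * (η * u)) x + u x ^ 2 * aForm d A η η x := by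
  rw [aForm_mul_right hη hu, aForm_comm (f := η * u) (g := u) hA,
    aForm_comm (f := η * u) (g := η) hA, aForm_mul_right hη hu, aForm_mul_right hη hu,
    aForm_mul_right hη (hη.mul hu), aForm_mul_right hη hu, aForm_comm (f := η) (g := u) hA,
    Pi.mul_apply]
  ring

lemma aForm_mul_self_sub_cutoffPotential_mul_sq (hA : (A x).IsSymm)
    (hη : DifferentiableAt ℝ η x) (hu : DifferentiableAt ℝ u x) :
    aForm d A (η * u) (η * u) x - cutoffPotential d A b η x * u x ^ 2
      = (aForm d A u (η * (η * u)) x - u x * advect d b (η * (η * u)) x)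
        + 1 / 2 * (advect d b ((η * u) * (η * u)) x + ((η * u) * (η * u)) x * divg d b x) := by
  rw [aForm_mul_mul_self hA hη hu, cutoffPotential, advect_mul hη (hη.mul hu),
    advect_mul (hη.mul hu) (hη.mul hu), advect_mul hη hu]
  simp only [Pi.mul_apply]
  ring

lemma mul_advect_le (t : ℝ) :
    t * advect d b f x ≤ (t ^ 2 * ∑ i, b x i ^ 2 + ∑ i, pd d i f x ^ 2) / 2 := by
  rw [advect, Finset.mul_sum, Finset.mul_sum, ← Finset.sum_add_distrib, Finset.sum_div]
  refine Finset.sum_le_sum fun i _ => ?_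
  linarith [two_mul_le_add_sq (t * b x i) (pd d i f x)]

lemma cutoffPotential_le {α β B : ℝ}
    (hA : aForm d A η η x ≤ α * ∑ i, pd d i η x ^ 2)
    (hb : ∑ i, b x i ^ 2 ≤ B) (hβ : 0 ≤ β) (hdiv : -β ≤ divg d b x) (hη1 : |η x| ≤ 1) :
    cutoffPotential d A b η x ≤ (α + 1 / 2) * ∑ i, pd d i η x ^ 2 + (β + B) / 2 := by
  have hη_sq : η x ^ 2 ≤ 1 := (sq_le_one_iff_abs_le_one _).2 hη1
  have hdrift : η x ^ 2 * ∑ i, b x i ^ 2 ≤ B :=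
    (mul_le_of_le_one_left (Finset.sum_nonneg fun i _ => sq_nonneg _) hη_sq).trans hb
  have hdivergence : -β ≤ η x ^ 2 * divg d b x := by
    nlinarith [mul_le_mul_of_nonneg_left hdiv (sq_nonneg (η x))]
  unfold cutoffPotential
  linarith [mul_advect_le (b := b) (f := η) (x := x) (η x)]

lemma aForm_mul_self_of_isLocalMax (hη : DifferentiableAt ℝ η x) (hu : DifferentiableAt ℝ u x)
    (hη1 : η x = 1) (hmax : IsLocalMax η x) :
    aForm d A (η * u) (η * u) x = aForm d A u u x := by
  simp [aForm, pd_mul _ hη hu, pd_eq_zero_of_isLocalMax _ hmax, hη1]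

end Pointwise

section Integration

variable {d : ℕ} {A : (Fin d → ℝ) → Matrix (Fin d) (Fin d) ℝ} {b : (Fin d → ℝ) → Fin d → ℝ}
  {f g η u : (Fin d → ℝ) → ℝ} {s t : Set (Fin d → ℝ)}

lemma continuous_pd (i : Fin d) (hf : ContDiff ℝ 1 f) : Continuous (pd d i f) :=
  (hf.continuous_fderiv one_ne_zero).clm_apply continuous_const

lemma continuous_aForm (hA : Continuous A) (hf : ContDiff ℝ 1 f) (hg : ContDiff ℝ 1 g) :
    Continuous (aForm d A f g) :=
  continuous_finsetSum _ fun i _ => continuous_finsetSum _ fun j _ =>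
    ((hA.matrix_elem i j).mul (continuous_pd j hf)).mul (continuous_pd i hg)

lemma continuous_advect (hb : Continuous b) (hf : ContDiff ℝ 1 f) :
    Continuous (advect d b f) :=
  continuous_finsetSum _ fun i _ => ((continuous_apply i).comp hb).mul (continuous_pd i hf)

lemma continuous_divg (hb : ContDiff ℝ 1 b) : Continuous (divg d b) :=
  continuous_finsetSum _ fun i _ => continuous_pd i (contDiff_pi.1 hb i)

lemma integrable_aForm (hA : Continuous A) (hf : ContDiff ℝ 1 f) (hg : ContDiff ℝ 1 g)
    (hgc : HasCompactSupport g) : Integrable (aForm d A f g) :=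
  (continuous_aForm hA hf hg).integrable_of_hasCompactSupport <|
    HasCompactSupport.intro hgc fun x hx => by simp [aForm, pd_eq_zero_of_notMem_tsupport _ hx]

lemma integrable_mul_advect (hf : Continuous f) (hb : Continuous b) (hg : ContDiff ℝ 1 g)
    (hgc : HasCompactSupport g) : Integrable fun x => f x * advect d b g x :=
  (hf.mul (continuous_advect hb hg)).integrable_of_hasCompactSupport <|
    HasCompactSupport.intro hgc fun x hx => by simp [advect, pd_eq_zero_of_notMem_tsupport _ hx]

lemma integrable_cutoffPotential_mul_sq (hA : Continuous A) (hb : ContDiff ℝ 1 b)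
    (hη : ContDiff ℝ 1 η) (hηc : HasCompactSupport η) (hu : Continuous u) :
    Integrable fun x => cutoffPotential d A b η x * u x ^ 2 := by
  have hcont : Continuous (cutoffPotential d A b η) :=
    ((continuous_aForm hA hη hη).add (hη.continuous.mul (continuous_advect hb.continuous hη))).sub
      (((hη.continuous.pow 2).div_const 2).mul (continuous_divg hb))
  refine (hcont.mul (hu.pow 2)).integrable_of_hasCompactSupport
    (HasCompactSupport.intro hηc fun x hx => ?_)
  simp [cutoffPotential, aForm, pd_eq_zero_of_notMem_tsupport _ hx,
    image_eq_zero_of_notMem_tsupport hx]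

lemma integrable_mul_pd (i : Fin d) (hf : Continuous f) (hg : ContDiff ℝ 1 g)
    (hgc : HasCompactSupport g) : Integrable fun x => f x * pd d i g x :=
  (hf.mul (continuous_pd i hg)).integrable_of_hasCompactSupport
    (hgc.fderiv_apply (𝕜 := ℝ) _).mul_left

lemma integrable_pd_mul (i : Fin d) (hf : ContDiff ℝ 1 f) (hg : Continuous g)
    (hgc : HasCompactSupport g) : Integrable fun x => pd d i f x * g x :=
  ((continuous_pd i hf).mul hg).integrable_of_hasCompactSupport hgc.mul_left

lemma integral_mul_pd_eq_neg (i : Fin d) (hf : ContDiff ℝ 1 f) (hg : ContDiff ℝ 1 g)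
    (hgc : HasCompactSupport g) :
    ∫ x, f x * pd d i g x = -∫ x, pd d i f x * g x :=
  integral_mul_fderiv_eq_neg_fderiv_mul_of_integrable
    (integrable_pd_mul i hf hg.continuous hgc) (integrable_mul_pd i hf.continuous hg hgc)
    ((hf.continuous.mul hg.continuous).integrable_of_hasCompactSupport hgc.mul_left)
    (fun x _ => hf.differentiable one_ne_zero x) (fun x _ => hg.differentiable one_ne_zero x)

lemma integral_advect_eq_neg (hb : ContDiff ℝ 1 b) (hg : ContDiff ℝ 1 g)
    (hgc : HasCompactSupport g) :
    ∫ x, advect d b g x = -∫ x, g x * divg d b x := by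
  have hbi : ∀ i, ContDiff ℝ 1 fun y => b y i := contDiff_pi.1 hb
  calc ∫ x, advect d b g x
      = ∑ i, ∫ x, b x i * pd d i g x :=
        integral_finsetSum _ fun i _ => integrable_mul_pd i (hbi i).continuous hg hgc
    _ = ∑ i, -∫ x, pd d i (fun y => b y i) x * g x :=
        Finset.sum_congr rfl fun i _ => integral_mul_pd_eq_neg i (hbi i) hg hgc
    _ = -∫ x, ∑ i, pd d i (fun y => b y i) x * g x := by
        rw [Finset.sum_neg_distrib,
          integral_finsetSum _ fun i _ => integrable_pd_mul i (hbi i) hg.continuous hgc]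
    _ = -∫ x, g x * divg d b x := by
        simp only [divg, pd, Finset.mul_sum, mul_comm]

lemma integrable_advect (hb : Continuous b) (hg : ContDiff ℝ 1 g) (hgc : HasCompactSupport g) :
    Integrable (advect d b g) :=
  integrable_finsetSum _ fun i _ => integrable_mul_pd i ((continuous_apply i).comp hb) hg hgc

lemma integrable_mul_divg (hb : ContDiff ℝ 1 b) (hg : Continuous g) (hgc : HasCompactSupport g) :
    Integrable fun x => g x * divg d b x :=
  (hg.mul (continuous_divg hb)).integrable_of_hasCompactSupport hgc.mul_right

lemma setIntegral_advect_add_mul_divg_eq_zero (hb : ContDiff ℝ 1 b) (hg : ContDiff ℝ 1 g)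
    (hgc : HasCompactSupport g) (hgs : tsupport g ⊆ s) :
    ∫ x in s, (advect d b g x + g x * divg d b x) = 0 := by
  rw [setIntegral_eq_integral_of_forall_compl_eq_zero,
    integral_add (integrable_advect hb.continuous hg hgc)
      (integrable_mul_divg hb hg.continuous hgc),
    integral_advect_eq_neg hb hg hgc, neg_add_cancel]
  intro x hx
  have hx' : x ∉ tsupport g := fun h => hx (hgs h)
  simp [advect, pd_eq_zero_of_notMem_tsupport _ hx', image_eq_zero_of_notMem_tsupport hx']

lemma BHarmonic.setIntegral_aForm_mul_self (hu : BHarmonic d s A b u) (hA : Continuous A)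
    (hAsymm : ∀ x, (A x).IsSymm) (hb : ContDiff ℝ 1 b) (hη : ContDiff ℝ 1 η)
    (hηc : HasCompactSupport η) (hηs : tsupport η ⊆ s) :
    ∫ x in s, aForm d A (η * u) (η * u) x = ∫ x in s, cutoffPotential d A b η x * u x ^ 2 := by
  obtain ⟨huC, hweak⟩ := hu
  have hw : ContDiff ℝ 1 (η * u) := hη.mul huC
  have hv : ContDiff ℝ 1 (η * (η * u)) := hη.mul hw
  have hww : ContDiff ℝ 1 ((η * u) * (η * u)) := hw.mul hw
  have hwc : HasCompactSupport (η * u) := hηc.mul_right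
  have hvc : HasCompactSupport (η * (η * u)) := hηc.mul_right
  have hwwc : HasCompactSupport ((η * u) * (η * u)) := hwc.mul_right
  have htest : ∫ x in s, (aForm d A u (η * (η * u)) x - u x * advect d b (η * (η * u)) x) = 0 :=
    hweak _ hv hvc (tsupport_mul_subset_left.trans hηs)
  have hdiv := setIntegral_advect_add_mul_divg_eq_zero hb hww hwwc
    ((tsupport_mul_subset_left.trans tsupport_mul_subset_left).trans hηs)
  have htest_int : IntegrableOn
      (fun x => aForm d A u (η * (η * u)) x - u x * advect d b (η * (η * u)) x) s :=
    ((integrable_aForm hA huC hv hvc).sub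
      (integrable_mul_advect huC.continuous hb.continuous hv hvc)).integrableOn
  have hdiv_int : IntegrableOn (fun x => 1 / 2 * (advect d b ((η * u) * (η * u)) x
      + ((η * u) * (η * u)) x * divg d b x)) s :=
    (((integrable_advect hb.continuous hww hwwc).add
      (integrable_mul_divg hb hww.continuous hwwc)).const_mul _).integrableOn
  rw [← sub_eq_zero, ← integral_sub (integrable_aForm hA hw hw hwc).integrableOn
    (integrable_cutoffPotential_mul_sq hA hb hη hηc huC.continuous).integrableOn]
  simp only [aForm_mul_self_sub_cutoffPotential_mul_sq (hAsymm _)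
    (hη.differentiable one_ne_zero _) (huC.differentiable one_ne_zero _)]
  rw [integral_add htest_int hdiv_int, integral_const_mul, htest, hdiv, mul_zero, add_zero]

lemma setIntegral_aForm_self_le_of_eq_one (hA : Continuous A)
    (hApos : ∀ x ξ : Fin d → ℝ, 0 ≤ ∑ i, ∑ j, A x i j * ξ j * ξ i) (hη : ContDiff ℝ 1 η)
    (hηc : HasCompactSupport η) (hη1 : ∀ x, η x ≤ 1) (ht : MeasurableSet t) (hts : t ⊆ s)
    (hηt : ∀ x ∈ t, η x = 1) (hu : ContDiff ℝ 1 u) :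
    ∫ x in t, aForm d A u u x ≤ ∫ x in s, aForm d A (η * u) (η * u) x := by
  have hw : ContDiff ℝ 1 (η * u) := hη.mul hu
  have hmax : ∀ x ∈ t, IsLocalMax η x := fun x hx =>
    Filter.Eventually.of_forall fun y => (hηt x hx).symm ▸ hη1 y
  calc ∫ x in t, aForm d A u u x
      = ∫ x in t, aForm d A (η * u) (η * u) x :=
        setIntegral_congr_fun ht fun x hx =>
          (aForm_mul_self_of_isLocalMax (hη.differentiable one_ne_zero x)
            (hu.differentiable one_ne_zero x) (hηt x hx) (hmax x hx)).symm
    _ ≤ ∫ x in s, aForm d A (η * u) (η * u) x :=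
        setIntegral_mono_set (integrable_aForm hA hw hw hηc.mul_right).integrableOn
          (Filter.Eventually.of_forall fun x => hApos x fun i => pd d i (η * u) x)
          hts.eventuallyLE

lemma sum_sq_pd_le_indicator {K : ℝ} (hη1 : ∀ x, η x ≤ 1) (hηt : ∀ x ∈ t, η x = 1)
    (hηK : ∀ x, ∑ i, pd d i η x ^ 2 ≤ K) (x : Fin d → ℝ) :
    ∑ i, pd d i η x ^ 2 ≤ tᶜ.indicator (fun _ => K) x := by
  by_cases hx : x ∈ t
  · have hmax : IsLocalMax η x := Filter.Eventually.of_forall fun y => (hηt x hx).symm ▸ hη1 y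
    simp [hx, pd_eq_zero_of_isLocalMax _ hmax]
  · simpa [hx] using hηK x

lemma setIntegral_cutoffPotential_mul_sq_le {α β B K : ℝ} (hA : Continuous A)
    (hA_le : ∀ x ξ : Fin d → ℝ, ∑ i, ∑ j, A x i j * ξ j * ξ i ≤ α * ∑ i, ξ i ^ 2) (hα : 0 ≤ α)
    (hb : ContDiff ℝ 1 b) (hbB : ∀ x, ∑ i, b x i ^ 2 ≤ B)
    (hβ : 0 ≤ β) (hdiv : ∀ x, -β ≤ divg d b x)
    (hη : ContDiff ℝ 1 η) (hηc : HasCompactSupport η) (hη1 : ∀ x, |η x| ≤ 1)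
    (ht : MeasurableSet t) (hηt : ∀ x ∈ t, η x = 1) (hηK : ∀ x, ∑ i, pd d i η x ^ 2 ≤ K)
    (hu : Continuous u) (hu2 : IntegrableOn (fun x => u x ^ 2) s) :
    ∫ x in s, cutoffPotential d A b η x * u x ^ 2
      ≤ (α + 1 / 2) * K * (∫ x in s \ t, u x ^ 2) + (β + B) / 2 * ∫ x in s, u x ^ 2 := by
  have hpointwise : ∀ x, cutoffPotential d A b η x * u x ^ 2
      ≤ (α + 1 / 2) * K * tᶜ.indicator (fun y => u y ^ 2) x + (β + B) / 2 * u x ^ 2 := by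
    intro x
    have hgrad := sum_sq_pd_le_indicator (fun y => (abs_le.1 (hη1 y)).2) hηt hηK x
    calc cutoffPotential d A b η x * u x ^ 2
        ≤ ((α + 1 / 2) * ∑ i, pd d i η x ^ 2 + (β + B) / 2) * u x ^ 2 := by
          gcongr
          exact cutoffPotential_le (hA_le x fun i => pd d i η x) (hbB x) hβ (hdiv x) (hη1 x)
      _ ≤ ((α + 1 / 2) * tᶜ.indicator (fun _ => K) x + (β + B) / 2) * u x ^ 2 := by gcongr
      _ = (α + 1 / 2) * K * tᶜ.indicator (fun y => u y ^ 2) x + (β + B) / 2 * u x ^ 2 := by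
          by_cases hx : x ∈ t
          · simp [hx]
          · simp only [Set.indicator_of_mem (Set.mem_compl hx)]
            ring
  have hout : IntegrableOn (fun x => (α + 1 / 2) * K * tᶜ.indicator (fun y => u y ^ 2) x) s :=
    (hu2.indicator ht.compl).const_mul _
  have hall : IntegrableOn (fun x => (β + B) / 2 * u x ^ 2) s := hu2.const_mul _
  have hsum : IntegrableOn (fun x => (α + 1 / 2) * K * tᶜ.indicator (fun y => u y ^ 2) x
      + (β + B) / 2 * u x ^ 2) s := hout.add hall
  calc ∫ x in s, cutoffPotential d A b η x * u x ^ 2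
      ≤ ∫ x in s, ((α + 1 / 2) * K * tᶜ.indicator (fun y => u y ^ 2) x
          + (β + B) / 2 * u x ^ 2) :=
        integral_mono (integrable_cutoffPotential_mul_sq hA hb hη hηc hu).integrableOn hsum
          hpointwise
    _ = (α + 1 / 2) * K * (∫ x in s \ t, u x ^ 2) + (β + B) / 2 * ∫ x in s, u x ^ 2 := by
        rw [integral_add hout hall, integral_const_mul, integral_const_mul,
          setIntegral_indicator ht.compl, Set.sdiff_eq]

lemma integrableOn_sq_of_isBounded (hf : Continuous f) (hs : Bornology.IsBounded s) :
    IntegrableOn (fun x => f x ^ 2) s :=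
  ((hf.pow 2).continuousOn.integrableOn_compact hs.isCompact_closure).mono_set subset_closure

end Integration

lemma sqrt_add_le_add_sqrt {x y : ℝ} (hx : 0 ≤ x) (hy : 0 ≤ y) : √(x + y) ≤ √x + √y := by
  simpa only [Real.sqrt_eq_rpow] using
    Real.rpow_add_le_add_rpow hx hy one_half_pos.le one_half_lt_one.le

theorem caccioppoli_inequality_general {d : ℕ} {Dstar D : Set (Fin d → ℝ)}
    {A : (Fin d → ℝ) → Matrix (Fin d) (Fin d) ℝ} {b : (Fin d → ℝ) → Fin d → ℝ}
    {η u : (Fin d → ℝ) → ℝ} {amax bBound divbBound K : ℝ}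
    (hA : Continuous A) (hAsymm : ∀ x, (A x).IsSymm)
    (hAnonneg : ∀ x ξ : Fin d → ℝ, 0 ≤ ∑ i, ∑ j, A x i j * ξ j * ξ i) (hamax : 0 ≤ amax)
    (hA_le : ∀ x ξ : Fin d → ℝ, ∑ i, ∑ j, A x i j * ξ j * ξ i ≤ amax * ∑ i, ξ i ^ 2)
    (hb : ContDiff ℝ 1 b) (hbB : ∀ x, √(∑ i, b x i ^ 2) ≤ bBound)
    (hdivbBound : 0 ≤ divbBound) (hdivb : ∀ x, -divbBound ≤ divg d b x)
    (hD : MeasurableSet D) (hη : ContDiff ℝ 1 η) (hηc : HasCompactSupport η)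
    (hηs : tsupport η ⊆ Dstar) (hη1 : ∀ x, |η x| ≤ 1) (hηD : ∀ x ∈ D, η x = 1)
    (hηK : ∀ x, √(∑ i, pd d i η x ^ 2) ≤ K)
    (hu : BHarmonic d Dstar A b u) (hu2 : IntegrableOn (fun x => u x ^ 2) Dstar) :
    √(∫ x in D, aForm d A u u x)
      ≤ √(amax + 1 / 2) * K * √(∫ x in Dstar \ D, u x ^ 2)
        + √((divbBound + bBound ^ 2) / 2) * √(∫ x in Dstar, u x ^ 2) := by
  have hbBound : 0 ≤ bBound := (Real.sqrt_nonneg _).trans (hbB 0)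
  have hK : 0 ≤ K := (Real.sqrt_nonneg _).trans (hηK 0)
  have hDsub : D ⊆ Dstar := fun x hx => hηs (subset_tsupport η (by simp [hηD x hx]))
  have henergy : ∫ x in D, aForm d A u u x
      ≤ (amax + 1 / 2) * K ^ 2 * (∫ x in Dstar \ D, u x ^ 2)
        + (divbBound + bBound ^ 2) / 2 * ∫ x in Dstar, u x ^ 2 :=
    calc ∫ x in D, aForm d A u u x
        ≤ ∫ x in Dstar, aForm d A (η * u) (η * u) x :=
          setIntegral_aForm_self_le_of_eq_one hA hAnonneg hη hηc (fun x => (abs_le.1 (hη1 x)).2)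
            hD hDsub hηD hu.1
      _ = ∫ x in Dstar, cutoffPotential d A b η x * u x ^ 2 :=
          hu.setIntegral_aForm_mul_self hA hAsymm hb hη hηc hηs
      _ ≤ _ :=
          setIntegral_cutoffPotential_mul_sq_le hA hA_le hamax hb
            (fun x => (Real.sqrt_le_left hbBound).1 (hbB x)) hdivbBound hdivb hη hηc hη1 hD hηD
            (fun x => (Real.sqrt_le_left hK).1 (hηK x)) hu.1.continuous hu2
  refine (Real.sqrt_le_sqrt henergy).trans
    ((sqrt_add_le_add_sqrt (by positivity) (by positivity)).trans_eq ?_)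
  rw [Real.sqrt_mul (by positivity), Real.sqrt_mul (by positivity), Real.sqrt_mul (by positivity),
    Real.sqrt_sq hK]

theorem caccioppoli_inequality
    (d : ℕ) (hd : 0 < d)
    (Dstar : Set (Fin d → ℝ)) (hopen : IsOpen Dstar) (hbdd : Bornology.IsBounded Dstar)
    (A : (Fin d → ℝ) → Matrix (Fin d) (Fin d) ℝ)
    (hAcont : Continuous A) (hAsymm : ∀ x, (A x).IsSymm)
    (amin amax : ℝ) (h0 : 0 < amin) (h1 : amin ≤ amax)
    (hellip : ∀ (x ξ : Fin d → ℝ),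
      amin * ∑ i, ξ i ^ 2 ≤ (∑ i, ∑ j, A x i j * ξ j * ξ i) ∧
      (∑ i, ∑ j, A x i j * ξ j * ξ i) ≤ amax * ∑ i, ξ i ^ 2)
    (b : (Fin d → ℝ) → Fin d → ℝ) (hb : ContDiff ℝ 1 b)
    (bBound divbBound : ℝ)
    (hbB : ∀ x, Real.sqrt (∑ i, b x i ^ 2) ≤ bBound)
    (hdivbB : ∀ x, |divg d b x| ≤ divbBound)
    (D : Set (Fin d → ℝ)) (hDopen : IsOpen D) (hDsub : D ⊆ Dstar)
    (δ : ℝ) (hδ : 0 < δ)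
    (η : (Fin d → ℝ) → ℝ) (hη : ContDiff ℝ 1 η)
    (hηc : HasCompactSupport η) (hηs : tsupport η ⊆ Dstar)
    (hη01 : ∀ x, 0 ≤ η x ∧ η x ≤ 1)
    (hηD : ∀ x ∈ D, η x = 1)
    (hηgrad : ∀ x, Real.sqrt (∑ i, (pd d i η x) ^ 2) ≤ δ⁻¹)
    (u : (Fin d → ℝ) → ℝ) (hu : BHarmonic d Dstar A b u) :
    Real.sqrt (∫ x in D, aForm d A u u x)
      ≤ Real.sqrt (2 * amax + 1) * δ⁻¹ * Real.sqrt (∫ x in Dstar \ D, u x ^ 2)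
        + Real.sqrt (2 * divbBound + bBound ^ 2 * (1 + amin⁻¹)) *
            Real.sqrt (∫ x in Dstar, u x ^ 2) := by
  have hAnonneg : ∀ x ξ : Fin d → ℝ, 0 ≤ ∑ i, ∑ j, A x i j * ξ j * ξ i := fun x ξ =>
    (mul_nonneg h0.le (Finset.sum_nonneg fun i _ => sq_nonneg (ξ i))).trans (hellip x ξ).1
  have hamax : 0 ≤ amax := h0.le.trans h1
  have hdivbBound : 0 ≤ divbBound := (abs_nonneg _).trans (hdivbB 0)
  refine (caccioppoli_inequality_general hAcont hAsymm hAnonneg hamax (fun x ξ => (hellip x ξ).2)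
    hb hbB hdivbBound (fun x => (abs_le.1 (hdivbB x)).1) hDopen.measurableSet hη hηc hηs
    (fun x => (abs_of_nonneg (hη01 x).1).trans_le (hη01 x).2) hηD hηgrad hu
    (integrableOn_sq_of_isBounded hu.1.continuous hbdd)).trans ?_
  gcongr √?_ * _ * _ + √?_ * _
  · linarith
  · linarith [sq_nonneg bBound, mul_nonneg (sq_nonneg bBound) (inv_nonneg.2 h0.le)]
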